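/- Imperfect-parity expectation in a rotated GHZ state: let N ≥ 1 and δ, η, φ ∈ ℝ. On the Hilbert space ℂ^{(Fin N → Fin 2)}, define the matrix P by P(v, w) := ∏_{j} A(v(j), w(j)), where A is the 2×2 real matrix with A(0,0) = A(1,1) = δ and A(0,1) = A(1,0) = η. Define the unit vector g by g(v) := (1/√2)·e^{iNφ/2} if v is the constant function 0, g(v) := (1/√2)·e^{−iNφ/2} if v is the constant function 1, and g(v) := 0 otherwise. Then ⟨g, P·g⟩ = δ^N + η^N·cos(Nφ). -/

import Mathlib

open Matrix
open scoped Classical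

/-! The parity observable is a Kronecker power, so its entry between two constant words is the
`N`-th power of an entry of the one-qubit matrix. A GHZ state is supported on the constant words
`0…0` and `1…1`: the two diagonal entries contribute `δ ^ N`, weighted by the populations `1/2`, and
the two off-diagonal entries contribute `η ^ N`, weighted by the coherences `exp (∓iNφ) / 2`, which
add up to `cos (Nφ)`. -/

theorem single_add_single_dotProduct_mulVec {m n R : Type*} [Fintype m] [DecidableEq m] [Fintype n]
    [DecidableEq n] [NonUnitalNonAssocSemiring R] (M : Matrix m n R) (i j : m) (k l : n)
    (a b c d : R) :
    (Pi.single i a + Pi.single j b) ⬝ᵥ (M *ᵥ (Pi.single k c + Pi.single l d)) =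
      a * (M i k * c) + a * (M i l * d) + b * (M j k * c) + b * (M j l * d) := by
  simp only [add_dotProduct, single_dotProduct, mulVec_add, Pi.add_apply, mulVec_single,
    Pi.smul_apply, col_apply, op_smul_eq_mul, mul_add, add_assoc]

section KroneckerPower

variable {κ R : Type*} (ι : Type*) [Fintype ι] [CommMonoid R]

/-- The Kronecker power `A ⊗ ⋯ ⊗ A` with one factor for each element of `ι`. A basis vector of the
tensor power is encoded by the function `ι → κ` listing its tensor factors. -/
def kroneckerPower (A : Matrix κ κ R) : Matrix (ι → κ) (ι → κ) R :=
  Matrix.of fun v w => ∏ j, A (v j) (w j)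

theorem kroneckerPower_const_const (A : Matrix κ κ R) (x y : κ) :
    kroneckerPower ι A (fun _ => x) (fun _ => y) = A x y ^ Fintype.card ι := by
  simp [kroneckerPower]

end KroneckerPower

section GHZ

/-- The amplitude `exp (iθ/2) / √2` of one branch of a GHZ state whose two branches have relative
phase `θ`; the other branch has amplitude `ghzAmplitude (-θ)`. -/
noncomputable def ghzAmplitude (θ : ℝ) : ℂ :=
  1 / (Real.sqrt 2 : ℂ) * Complex.exp (Complex.I * θ / 2)

theorem star_ghzAmplitude (θ : ℝ) : star (ghzAmplitude θ) = ghzAmplitude (-θ) := by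
  simp [ghzAmplitude, ← Complex.exp_conj, Complex.conj_ofNat]

theorem ghzAmplitude_mul_ghzAmplitude (θ θ' : ℝ) :
    ghzAmplitude θ * ghzAmplitude θ' = Complex.exp (Complex.I * (θ + θ') / 2) / 2 := by
  have inv_sqrt_two_mul_self : 1 / (Real.sqrt 2 : ℂ) * (1 / (Real.sqrt 2 : ℂ)) = 1 / 2 := by
    rw [div_mul_div_comm, ← Complex.ofReal_mul, Real.mul_self_sqrt zero_le_two]
    norm_num
  rw [ghzAmplitude, ghzAmplitude, mul_mul_mul_comm, inv_sqrt_two_mul_self, ← Complex.exp_add]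
  ring_nf

variable (ι : Type*) [Fintype ι]

/-- The GHZ state `(exp (iθ/2) |0…0⟩ + exp (-iθ/2) |1…1⟩) / √2` of qubits indexed by `ι`.
The rotation `exp (iφJ_z)` of `N` qubits produces the relative phase `θ = Nφ`. -/
noncomputable def ghzState (θ : ℝ) : (ι → Fin 2) → ℂ :=
  Pi.single (fun _ => 0) (ghzAmplitude θ) + Pi.single (fun _ => 1) (ghzAmplitude (-θ))

theorem star_ghzState (θ : ℝ) : star (ghzState ι θ) = ghzState ι (-θ) := by
  simp [ghzState, star_ghzAmplitude]

theorem ghzState_apply [Nonempty ι] (θ : ℝ) (v : ι → Fin 2) :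
    ghzState ι θ v =
      if v = (fun _ => 0) then ghzAmplitude θ
      else if v = (fun _ => 1) then ghzAmplitude (-θ)
      else 0 := by
  have const_zero_ne_const_one : (fun _ => 0 : ι → Fin 2) ≠ fun _ => 1 :=
    Function.const_injective.ne Fin.zero_ne_one
  by_cases h : v = fun _ => 0
  · simp [ghzState, h, const_zero_ne_const_one]
  · simp [ghzState, Pi.single_apply, h]

variable [DecidableEq ι]

theorem ghz_imperfect_parity_expectation_general (A : Matrix (Fin 2) (Fin 2) ℂ) (θ : ℝ) :
    star (ghzState ι θ) ⬝ᵥ (kroneckerPower ι A *ᵥ ghzState ι θ) =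
      (A 0 0 ^ Fintype.card ι + A 1 1 ^ Fintype.card ι) / 2 +
        (Complex.exp (-(Complex.I * θ)) * A 0 1 ^ Fintype.card ι +
          Complex.exp (Complex.I * θ) * A 1 0 ^ Fintype.card ι) / 2 := by
  have diag : ghzAmplitude θ * ghzAmplitude (-θ) = 1 / 2 := by
    simp [ghzAmplitude_mul_ghzAmplitude]
  have upper : ghzAmplitude (-θ) * ghzAmplitude (-θ) = Complex.exp (-(Complex.I * θ)) / 2 := by
    rw [ghzAmplitude_mul_ghzAmplitude]
    push_cast
    ring_nf
  have lower : ghzAmplitude θ * ghzAmplitude θ = Complex.exp (Complex.I * θ) / 2 := by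
    rw [ghzAmplitude_mul_ghzAmplitude]
    ring_nf
  rw [star_ghzState, ghzState, ghzState, single_add_single_dotProduct_mulVec]
  simp only [neg_neg, kroneckerPower_const_const]
  linear_combination (A 0 0 ^ Fintype.card ι + A 1 1 ^ Fintype.card ι) * diag +
    A 0 1 ^ Fintype.card ι * upper + A 1 0 ^ Fintype.card ι * lower

end GHZ

/-- imperfect-parity expectation in a rotated GHZ state: for the
N-fold Kronecker product P of the 2×2 matrix with diagonal entries δ and
off-diagonal entries η, and the GHZ state g rotated by phase φ, one has
⟨g, P g⟩ = δ^N + η^N cos(Nφ). -/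
theorem ghz_imperfect_parity_expectation
    (N : ℕ) (hN : 1 ≤ N) (δ η φ : ℝ)
    (P : Matrix (Fin N → Fin 2) (Fin N → Fin 2) ℂ)
    (hP : ∀ v w, P v w = ∏ j, (if v j = w j then (δ : ℂ) else (η : ℂ)))
    (g : (Fin N → Fin 2) → ℂ)
    (hg : ∀ v, g v =
      if v = (fun _ => 0) then
        (1 / (Real.sqrt 2 : ℂ)) * Complex.exp (Complex.I * N * φ / 2)
      else if v = (fun _ => 1) then
        (1 / (Real.sqrt 2 : ℂ)) * Complex.exp (-(Complex.I * N * φ) / 2)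
      else 0) :
    star g ⬝ᵥ (P *ᵥ g) = ((δ ^ N + η ^ N * Real.cos (N * φ) : ℝ) : ℂ) := by
  have : Nonempty (Fin N) := Fin.pos_iff_nonempty.mp hN
  obtain rfl : P = kroneckerPower (Fin N) (.of fun x y => if x = y then (δ : ℂ) else η) :=
    Matrix.ext hP
  obtain rfl : g = ghzState (Fin N) (N * φ) := funext fun v => by
    simp [hg v, ghzState_apply, ghzAmplitude, mul_assoc]
  rw [ghz_imperfect_parity_expectation_general]
  simp only [of_apply, ↓reduceIte, zero_ne_one, one_ne_zero, Fintype.card_fin]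
  push_cast [Complex.cos]
  ring_nf
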